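/- arXiv:2208.13069 — 2 statements merged into one kernel-verified Lean document; each statement's English description precedes it below -/
import Mathlib

section
/- Let G be a countable group, M ⊆ G a finite subset, V a finite-dimensional vector space over a field k, S = L(V^M, V), and s ∈ S^G. Then the linear NUCA σ_s is pre-injective if and only if σ_p is pre-injective for every p ∈ Σ(s) (i.e., σ_s is pre-injective if and only if it is stably pre-injective). -/
open scoped BigOperators

/-- The linear NUCA `σ_s : V^G → V^G` with memory `M ⊆ G` associated with the
configuration of local defining maps `s`, given in coefficient form:
`σ_s(x)(g) = ∑_{m ∈ M} s(g,m)(x(g·m))`. -/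
def nucaMap {k V G : Type*} [Field k] [AddCommGroup V] [Module k V] [Group G]
    (M : Finset G) (s : G → G → (V →ₗ[k] V)) (x : G → V) : G → V :=
  fun g => ∑ m ∈ M, s g m (x (g * m))

/-- Two configurations are asymptotic if they agree outside a finite set. -/
def Asymptotic {G A : Type*} (x y : G → A) : Prop :=
  Set.Finite {g : G | x g ≠ y g}

/-- A map `σ : V^G → V^G` is pre-injective if `σ(x) = σ(y)` implies `x = y` whenever
`x` and `y` are asymptotic. -/
def PreInjective {G V : Type*} (σ : (G → V) → (G → V)) : Prop :=
  ∀ x y : G → V, Asymptotic x y → σ x = σ y → x = y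

/-- `Σ(s)`: the closure, in the prodiscrete topology (local maps `S` discrete),
of the shift orbit `{g·s : g ∈ G}` of the configuration of local defining maps `s`,
where `(g·s)(h) = s(g⁻¹h)`. -/
def orbitClosure {G E : Type*} [Group G] (s : G → G → E) : Set (G → G → E) :=
  @closure _ (@Pi.topologicalSpace G (fun _ => G → E) (fun _ => ⊥))
    (Set.range fun g : G => fun h : G => s (g⁻¹ * h))

/-- A linear NUCA with finite memory over a finite-dimensional vector space alphabet
is pre-injective if and only if it is stably pre-injective. -/
theorem stmt2 {k V G : Type*} [Field k] [AddCommGroup V] [Module k V]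
    [FiniteDimensional k V] [Group G] [Countable G]
    (M : Finset G) (s : G → G → (V →ₗ[k] V)) (hs : ∀ g, ∀ m ∉ M, s g m = 0) :
    PreInjective (nucaMap M s) ↔
      ∀ p ∈ orbitClosure s, PreInjective (nucaMap M p) := by
  classical
  constructor
  · intro H p hp x y hxy he
    have hE : (Set.image2 (fun a m : G => a * m⁻¹) {g : G | x g ≠ y g} (M : Set G)).Finite :=
      Set.Finite.image2 _ hxy M.finite_toSet
    set E := Set.image2 (fun a m : G => a * m⁻¹) {g : G | x g ≠ y g} (M : Set G) with hEdef
    obtain ⟨g, hg⟩ : ∃ g : G, ∀ h ∈ E, s (g⁻¹ * h) = p h := by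
      letI : TopologicalSpace (G → (V →ₗ[k] V)) := ⊥
      haveI : DiscreteTopology (G → (V →ₗ[k] V)) := ⟨rfl⟩
      have hp' := mem_closure_iff.1 hp (Set.pi E fun h => {p h})
        (isOpen_set_pi hE fun _ _ => isOpen_discrete _) (fun h _ => rfl)
      obtain ⟨q, hq, ⟨g, rfl⟩⟩ := hp'
      exact ⟨g, fun h hh => hq h hh⟩
    have key : (fun h => x (g * h)) = fun h => y (g * h) := by
      apply H
      · exact Set.Finite.preimage (f := fun h => g * h) (mul_right_injective g).injOn hxy
      · funext h
        by_cases hh : g * h ∈ E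
        · have h1 := congrFun he (g * h)
          have h2 := hg _ hh
          rw [inv_mul_cancel_left] at h2
          simp only [nucaMap, ← h2] at h1 ⊢
          simpa only [mul_assoc] using h1
        · apply Finset.sum_congr rfl
          intro m hm
          have : x (g * (h * m)) = y (g * (h * m)) := by
            by_contra hne
            exact hh ⟨g * (h * m), hne, m, hm, by group⟩
          simp only [this]
    funext h
    simpa using congrFun key (g⁻¹ * h)
  · intro H
    apply H
    apply @subset_closure _ (@Pi.topologicalSpace G (fun _ => G → (V →ₗ[k] V)) (fun _ => ⊥))
    exact ⟨1, by simp⟩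
end

section
/- Let M be a finite subset of a countable group G, let V be a finite-dimensional vector space over a finite field (so V is a finite set), let S = L(V^M, V), and let s ∈ S^G be asymptotic to a constant configuration (i.e., there is s₀ ∈ S with s(g) = s₀ for all but finitely many g ∈ G). Then σ_s is invertible in each of the following cases: (i) G is amenable (for every finite K ⊆ G and every ε > 0 there is a nonempty finite F ⊆ G with |kF △ F| ≤ ε·|F| for all k ∈ K) and σ_s is post-surjective; (ii) G is residually finite (for every g ∈ G with g ≠ 1_G there exists a finite-index normal subgroup N ⊴ G with g ∉ N) and σ_s is stably post-surjective. -/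
open scoped BigOperators Pointwise

/-- A map `σ : V^G → V^G` is post-surjective if for all `x, y` with `y` asymptotic to
`σ(x)` there is `z` asymptotic to `x` with `σ(z) = y`. -/
def PostSurjective {G V : Type*} (σ : (G → V) → (G → V)) : Prop :=
  ∀ x y : G → V, Asymptotic y (σ x) → ∃ z : G → V, Asymptotic z x ∧ σ z = y

/-- The dual configuration `s*` of local defining maps, in coefficient form:
`s*(g,m) = (s(g·m, m⁻¹))ᵀ`, the transpose (dual map) of `s(g·m, m⁻¹)`. -/
def dualCoeff {k V G : Type*} [Field k] [AddCommGroup V] [Module k V] [Group G]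
    (s : G → G → (V →ₗ[k] V)) :
    G → G → (Module.Dual k V →ₗ[k] Module.Dual k V) :=
  fun g m => (s (g * m) m⁻¹).dualMap

open scoped symmDiff

/-- A NUCA `σ` over `W^G` is invertible if there is a linear NUCA with finite memory
which is a two-sided inverse of `σ`. -/
def IsInvertibleNuca (k : Type*) [Field k] {W G : Type*} [AddCommGroup W]
    [Module k W] [Group G] (σ : (G → W) → (G → W)) : Prop :=
  ∃ (N : Finset G) (t : G → G → (W →ₗ[k] W)),
    (∀ x, nucaMap N t (σ x) = x) ∧ (∀ x, σ (nucaMap N t x) = x)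

namespace Aux17

variable {k V G H W : Type*} [Field k] [AddCommGroup V] [Module k V] [Group G] [Group H]
  [AddCommGroup W] [Module k W]

/-- The action of a NUCA on finitely supported configurations. -/
noncomputable def sop (M : Finset G) (s : G → G → (V →ₗ[k] V)) : (G →₀ V) →ₗ[k] (G →₀ V) :=
  Finsupp.lsum ℕ fun h => ∑ m ∈ M, (Finsupp.lsingle (h * m⁻¹)) ∘ₗ s (h * m⁻¹) m

/-- The constant coefficient operator pushed forward along a homomorphism. -/
noncomputable def cop (M : Finset G) (φ : G →* H) (c : G → (V →ₗ[k] V)) :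
    (H →₀ V) →ₗ[k] (H →₀ V) :=
  Finsupp.lsum ℕ fun h => ∑ m ∈ M, (Finsupp.lsingle (h * (φ m)⁻¹)) ∘ₗ c m

lemma sop_single (M : Finset G) (s : G → G → (V →ₗ[k] V)) (h : G) (v : V) :
    sop M s (Finsupp.single h v)
      = ∑ m ∈ M, Finsupp.single (h * m⁻¹) (s (h * m⁻¹) m v) := by
  simp [sop, LinearMap.sum_apply]

lemma cop_single (M : Finset G) (φ : G →* H) (c : G → (V →ₗ[k] V)) (h : H) (v : V) :
    cop M φ c (Finsupp.single h v)
      = ∑ m ∈ M, Finsupp.single (h * (φ m)⁻¹) (c m v) := by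
  simp [cop, LinearMap.sum_apply]

lemma sop_apply (M : Finset G) (s : G → G → (V →ₗ[k] V)) (x : G →₀ V) (g : G) :
    sop M s x g = nucaMap M s x g := by
  classical
  induction x using Finsupp.induction_linear with
  | zero => simp [nucaMap]
  | add x y hx hy =>
    rw [map_add, Finsupp.add_apply, hx, hy]
    simp [nucaMap, Finset.sum_add_distrib]
  | single h v =>
    rw [sop_single, Finsupp.finsetSum_apply]
    unfold nucaMap
    refine Finset.sum_congr rfl fun m _ => ?_
    by_cases e : h = g * m
    · subst e; simp
    · rw [Finsupp.single_eq_of_ne, Finsupp.single_eq_of_ne, map_zero]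
      · exact fun h' => e h'.symm
      · intro h'; apply e; rw [h']; simp

lemma sop_surj (M : Finset G) (s : G → G → (V →ₗ[k] V))
    (hp : PostSurjective (nucaMap M s)) : Function.Surjective (sop M s) := by
  intro y
  have h0 : nucaMap M s (0 : G → V) = 0 := by ext g; simp [nucaMap]
  obtain ⟨z, hz, hzy⟩ := hp 0 y (by
    rw [h0]; exact y.finite_support)
  refine ⟨Finsupp.ofSupportFinite z hz, ?_⟩
  ext g
  rw [sop_apply]
  exact congrFun hzy g

/-- left translation -/
noncomputable def tr (g : G) : (G →₀ V) →ₗ[k] (G →₀ V) := Finsupp.lmapDomain V k (fun h => g * h)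

lemma tr_single (g h : G) (v : V) :
    tr (k := k) g (Finsupp.single h v) = Finsupp.single (g * h) v := by
  simp [tr]

lemma tr_apply (g h : G) (x : G →₀ V) : tr (k := k) g x h = x (g⁻¹ * h) := by
  have := Finsupp.mapDomain_apply (mul_right_injective g) x (g⁻¹ * h)
  simpa [tr] using this

lemma tr_sop (M : Finset G) (c : G → (V →ₗ[k] V)) (g : G) (x : G →₀ V) :
    sop M (fun _ => c) (tr (k := k) g x) = tr (k := k) g (sop M (fun _ => c) x) := by
  induction x using Finsupp.induction_linear with
  | zero => simp
  | add x y hx hy => simp only [map_add, hx, hy]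
  | single h v => simp only [tr_single, sop_single, map_sum, mul_assoc]

lemma map_sop (M : Finset G) (φ : G →* H) (c : G → (V →ₗ[k] V)) (x : G →₀ V) :
    cop M φ c (Finsupp.lmapDomain V k φ x)
      = Finsupp.lmapDomain V k φ (sop M (fun _ => c) x) := by
  induction x using Finsupp.induction_linear with
  | zero => simp
  | add x y hx hy => simp only [map_add, hx, hy]
  | single h v => simp [sop_single, cop_single, map_sum, Finsupp.mapDomain_single]

lemma bij_of_finite_diff (f g : W →ₗ[k] W) (hfin : FiniteDimensional k (W ⧸ LinearMap.ker (f - g)))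
    (hf : Function.Surjective f) (hg : Function.Injective g) :
    Function.Injective f ∧ Function.Surjective g := by
  set K := LinearMap.ker (f - g) with hK
  have hKx : ∀ x ∈ K, f x = g x := by
    intro x hx
    rw [hK, LinearMap.mem_ker, LinearMap.sub_apply, sub_eq_zero] at hx
    exact hx
  let f' : (W ⧸ K) →ₗ[k] (W ⧸ K.map g) := K.mapQ (K.map g) f (by
    intro x hx
    exact ⟨x, hx, (hKx x hx).symm⟩)
  let g' : (W ⧸ K) →ₗ[k] (W ⧸ K.map g) := K.mapQ (K.map g) g (by
    intro x hx
    exact ⟨x, hx, rfl⟩)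
  have fq_surj : Function.Surjective f' := by
    intro y
    obtain ⟨y, rfl⟩ := Submodule.Quotient.mk_surjective _ y
    obtain ⟨x, rfl⟩ := hf y
    exact ⟨Submodule.Quotient.mk x, rfl⟩
  have gq_inj : Function.Injective g' := by
    rw [← LinearMap.ker_eq_bot, LinearMap.ker_eq_bot']
    intro y hy
    obtain ⟨y, rfl⟩ := Submodule.Quotient.mk_surjective _ y
    have : (Submodule.Quotient.mk (g y) : W ⧸ K.map g) = 0 := hy
    rw [Submodule.Quotient.mk_eq_zero] at this
    obtain ⟨x, hx, hxy⟩ := this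
    rw [Submodule.Quotient.mk_eq_zero]
    rw [← hg hxy]; exact hx
  have fd : FiniteDimensional k (W ⧸ K.map g) := Module.Finite.of_surjective f' fq_surj
  have e : Module.finrank k (W ⧸ K) = Module.finrank k (W ⧸ K.map g) :=
    le_antisymm (LinearMap.finrank_le_finrank_of_injective gq_inj)
      (LinearMap.finrank_le_finrank_of_surjective fq_surj)
  have fq_inj : Function.Injective f' := (LinearMap.injective_iff_surjective_of_finrank_eq_finrank e).2 fq_surj
  have gq_surj : Function.Surjective g' := (LinearMap.injective_iff_surjective_of_finrank_eq_finrank e).1 gq_inj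
  constructor
  · rw [← LinearMap.ker_eq_bot, LinearMap.ker_eq_bot']
    intro x hx
    have h1 : f' (Submodule.Quotient.mk x) = 0 := by
      change Submodule.Quotient.mk (f x) = _
      rw [hx]; rfl
    have h2 : (Submodule.Quotient.mk x : W ⧸ K) = 0 := fq_inj (by rw [h1, map_zero])
    rw [Submodule.Quotient.mk_eq_zero] at h2
    apply hg
    rw [← hKx x h2, hx, map_zero]
  · intro y
    obtain ⟨x, hx⟩ := gq_surj (Submodule.Quotient.mk y)
    obtain ⟨x, rfl⟩ := Submodule.Quotient.mk_surjective _ x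
    have : (Submodule.Quotient.mk (g x) : W ⧸ K.map g) = Submodule.Quotient.mk y := hx
    rw [Submodule.Quotient.eq] at this
    obtain ⟨u, -, hu⟩ := this
    exact ⟨x - u, by rw [map_sub, hu]; abel⟩

lemma diff_supp [DecidableEq G] (M : Finset G) (s : G → G → (V →ₗ[k] V)) (c : G → (V →ₗ[k] V))
    (x : G →₀ V) (g : G) (hg : s g = c) : (sop M s - sop M (fun _ => c)) x g = 0 := by
  simp [sop_apply, nucaMap, hg]

lemma diff_fin [FiniteDimensional k V] (M : Finset G) (s : G → G → (V →ₗ[k] V)) (c : G → (V →ₗ[k] V))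
    (hc : Set.Finite {g : G | s g ≠ c}) :
    FiniteDimensional k ((G →₀ V) ⧸ LinearMap.ker (sop M s - sop M (fun _ => c))) := by
  classical
  have := hc.to_subtype
  let ψ : (G →₀ V) →ₗ[k] ({g : G | s g ≠ c} → V) :=
    LinearMap.pi fun g => (Finsupp.lapply g.1) ∘ₗ (sop M s - sop M (fun _ => c))
  have hker : LinearMap.ker ψ = LinearMap.ker (sop M s - sop M (fun _ => c)) := by
    ext x
    rw [LinearMap.mem_ker, LinearMap.mem_ker]
    constructor
    · intro h
      ext g
      by_cases hg : s g = c
      · exact diff_supp M s c x g hg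
      · exact congrFun h ⟨g, hg⟩
    · intro h
      ext g
      simp only [ψ, LinearMap.pi_apply, LinearMap.comp_apply, h]
      simp
  rw [← hker]
  exact Module.Finite.of_injective _ (LinearMap.ker_eq_bot.1 (Submodule.ker_liftQ_eq_bot' _ ψ rfl))

/-- Invertibility from bijectivity on finitely supported configurations plus bounded support. -/
lemma invertible_of [DecidableEq G] (M : Finset G) (s : G → G → (V →ₗ[k] V))
    (hb : Function.Bijective (sop M s)) (N : Finset G)
    (hN : ∀ h v w, sop M s w = Finsupp.single h v → ∀ g, w g ≠ 0 → g⁻¹ * h ∈ N) :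
    IsInvertibleNuca k (nucaMap M s) := by
  let e := LinearEquiv.ofBijective (sop M s) hb
  let t : G → G → (V →ₗ[k] V) := fun g m =>
    (Finsupp.lapply g) ∘ₗ e.symm.toLinearMap ∘ₗ (Finsupp.lsingle (g * m))
  have ht : ∀ (x : G →₀ V) g, nucaMap N t x g = e.symm x g := by
    intro x g
    induction x using Finsupp.induction_linear with
    | zero => simp [nucaMap]
    | add x y hx hy =>
      rw [map_add, Finsupp.add_apply, ← hx, ← hy]
      simp [nucaMap, Finset.sum_add_distrib]
    | single h v =>
      unfold nucaMap
      by_cases hm : g⁻¹ * h ∈ N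
      · rw [Finset.sum_eq_single_of_mem _ hm]
        · simp [t]
        · intro m _ hne
          rw [Finsupp.single_eq_of_ne, map_zero]
          rintro rfl
          simp at hne
      · rw [Finset.sum_eq_zero]
        · by_contra hc
          exact hm (hN h v (e.symm (Finsupp.single h v)) (e.apply_symm_apply _) g (Ne.symm hc))
        · intro m hmN
          rw [Finsupp.single_eq_of_ne, map_zero]
          rintro rfl
          simp [hmN] at hm
  have trunc : ∀ (A : Finset G) (x : G → V), ∃ y : G →₀ V, ∀ a ∈ A, y a = x a := by
    intro A x
    refine ⟨Finsupp.onFinset A (fun a => if a ∈ A then x a else 0) ?_, ?_⟩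
    · intro a ha; by_contra h; simp [h] at ha
    · intro a ha; simp [ha]
  have loc : ∀ (P Q : Finset G) (p q : G → G → (V →ₗ[k] V)),
      (∀ x : G →₀ V, nucaMap P p (nucaMap Q q x) = x) →
      ∀ x, nucaMap P p (nucaMap Q q x) = x := by
    intro P Q p q h x
    ext g
    obtain ⟨y, hy⟩ := trunc (insert g ((P ×ˢ Q).image fun a => g * a.1 * a.2)) x
    have h1 := congrFun (h y) g
    rw [hy g (Finset.mem_insert_self _ _)] at h1
    rw [← h1]
    unfold nucaMap
    refine Finset.sum_congr rfl fun a ha => congrArg _ (Finset.sum_congr rfl fun b hb => ?_)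
    rw [hy]
    refine Finset.mem_insert_of_mem (Finset.mem_image.2 ⟨(a, b), ?_, rfl⟩)
    simp [ha, hb]
  refine ⟨N, t, loc _ _ _ _ fun x => ?_, loc _ _ _ _ fun x => ?_⟩
  · have : nucaMap M s x = (sop M s x : G →₀ V) := by ext g; rw [sop_apply]
    rw [this]; ext g; rw [ht]
    exact DFunLike.congr_fun (e.symm_apply_apply x) g
  · have : nucaMap N t x = (e.symm x : G →₀ V) := by ext g; rw [ht]
    rw [this]; ext g; rw [← sop_apply]
    exact DFunLike.congr_fun (e.apply_symm_apply x) g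

lemma invertible_of_cofin [Finite V] [DecidableEq G] (M : Finset G) (s : G → G → (V →ₗ[k] V))
    (hb : Function.Bijective (sop M s)) (N : Finset G) (B : Finset G)
    (hN : ∀ h ∉ B, ∀ v, ∃ w, sop M s w = Finsupp.single h v ∧ ∀ g, w g ≠ 0 → g⁻¹ * h ∈ N) :
    IsInvertibleNuca k (nucaMap M s) := by
  have := Fintype.ofFinite V
  let e := LinearEquiv.ofBijective (sop M s) hb
  refine invertible_of M s hb (N ∪ B.biUnion fun h => Finset.univ.biUnion fun v : V =>
    (e.symm (Finsupp.single h v)).support.image fun g => g⁻¹ * h) ?_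
  intro h v w hw g hg
  by_cases hB : h ∈ B
  · refine Finset.mem_union_right _ ?_
    simp only [Finset.mem_biUnion, Finset.mem_image]
    refine ⟨h, hB, v, Finset.mem_univ _, g, ?_, rfl⟩
    have : e.symm (Finsupp.single h v) = w := by rw [← hw]; exact e.symm_apply_apply w
    rw [this, Finsupp.mem_support_iff]; exact hg
  · obtain ⟨w', hw', hw''⟩ := hN h hB v
    have : w = w' := hb.1 (by rw [hw, hw'])
    subst this
    exact Finset.mem_union_left _ (hw'' g hg)

/-- Final step: constant part injective, `s` surjective. -/
lemma final [Finite V] [FiniteDimensional k V] [DecidableEq G] (M : Finset G)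
    (s : G → G → (V →ₗ[k] V)) (c : G → (V →ₗ[k] V))
    (hc : Set.Finite {g : G | s g ≠ c}) (hs : Function.Surjective (sop M s))
    (hi : Function.Injective (sop M (fun _ => c))) : IsInvertibleNuca k (nucaMap M s) := by
  have := Fintype.ofFinite V
  obtain ⟨h1, h2⟩ := bij_of_finite_diff _ _ (diff_fin M s c hc) hs hi
  choose w hw using fun v : V => h2 (Finsupp.single 1 v)
  let E : Finset G := Finset.univ.biUnion fun v : V => (w v).support
  refine invertible_of_cofin M s ⟨h1, hs⟩ E⁻¹ (hc.toFinset * M * E⁻¹) ?_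
  intro h hh v
  refine ⟨tr (k := k) h (w v), ?_, ?_⟩
  · have e1 : sop M (fun _ => c) (tr (k := k) h (w v)) = Finsupp.single h v := by
      rw [tr_sop, hw, tr_single, mul_one]
    rw [← e1]
    ext g
    by_cases hg : s g = c
    · exact sub_eq_zero.1 (diff_supp M s c _ g hg)
    · rw [sop_apply, sop_apply]
      unfold nucaMap
      refine Finset.sum_congr rfl fun m hm => ?_
      have : tr (k := k) h (w v) (g * m) = 0 := by
        rw [tr_apply]
        by_contra hne
        apply hh
        refine Finset.mem_mul.2 ⟨g * m, Finset.mul_mem_mul (by simpa using hg) hm,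
          (h⁻¹ * (g * m))⁻¹, Finset.inv_mem_inv ?_, by group⟩
        exact Finset.mem_biUnion.2 ⟨v, Finset.mem_univ _, by simpa using hne⟩
      rw [this, map_zero, map_zero]
  · intro g hg
    rw [tr_apply] at hg
    have : g⁻¹ * h = (h⁻¹ * g)⁻¹ := by group
    rw [this]
    exact Finset.inv_mem_inv (Finset.mem_biUnion.2 ⟨v, Finset.mem_univ _, by simpa using hg⟩)

lemma finite_case [Finite G] [FiniteDimensional k V] [DecidableEq G] (M : Finset G)
    (s : G → G → (V →ₗ[k] V)) (hs : Function.Surjective (sop M s)) :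
    IsInvertibleNuca k (nucaMap M s) := by
  have := Fintype.ofFinite G
  exact invertible_of M s ⟨LinearMap.injective_iff_surjective.2 hs, hs⟩ Finset.univ
    (fun _ _ _ _ _ _ => Finset.mem_univ _)

lemma resfin [FiniteDimensional k V] [DecidableEq G]
    (hG : ∀ g : G, g ≠ 1 → ∃ N : Subgroup G, N.Normal ∧ N.FiniteIndex ∧ g ∉ N)
    (M : Finset G) (c : G → (V →ₗ[k] V))
    (hs : Function.Surjective (sop M (fun _ => c))) :
    Function.Injective (sop M (fun _ => c)) := by
  rw [← LinearMap.ker_eq_bot, LinearMap.ker_eq_bot']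
  intro z hz
  by_contra hne
  obtain ⟨g, hg⟩ := Finsupp.support_nonempty_iff.2 hne
  choose! N hN using hG
  let I := (z.support.erase g)
  have hI : ∀ h ∈ I, g⁻¹ * h ≠ 1 := by
    intro h hh e
    exact (Finset.mem_erase.1 hh).1 (inv_mul_eq_one.1 e).symm
  let P : Subgroup G := ⨅ h : I, N (g⁻¹ * h.1)
  have hP1 : P.Normal := Subgroup.normal_iInf_normal fun h => (hN _ (hI h.1 h.2)).1
  have hP2 : P.FiniteIndex := Subgroup.finiteIndex_iInf fun h => (hN _ (hI h.1 h.2)).2.1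
  let φ := QuotientGroup.mk' P
  have hφ : Function.Surjective φ := QuotientGroup.mk'_surjective P
  have : Finite (G ⧸ P) := inferInstance
  have cs : Function.Surjective (cop M φ c) := by
    intro y
    obtain ⟨y, rfl⟩ : ∃ x, Finsupp.lmapDomain V k φ x = y := Finsupp.mapDomain_surjective hφ y
    obtain ⟨x, rfl⟩ := hs y
    exact ⟨_, map_sop M φ c x⟩
  have ci : Function.Injective (cop M φ c) := LinearMap.injective_iff_surjective.2 cs
  have h0 : Finsupp.lmapDomain V k φ z = 0 := ci (by rw [map_sop, hz, map_zero, map_zero])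
  have h1 : Finsupp.lmapDomain V k φ z (φ g) = z g := by
    classical
    rw [Finsupp.lmapDomain_apply, Finsupp.mapDomain, Finsupp.sum, Finsupp.finsetSum_apply,
      Finset.sum_eq_single_of_mem g hg]
    · simp
    · intro h hh hne
      rw [Finsupp.single_eq_of_ne]
      intro e
      have hP : g⁻¹ * h ∈ P := QuotientGroup.eq.1 e
      have hhI : h ∈ I := Finset.mem_erase.2 ⟨hne, hh⟩
      exact (hN _ (hI h hhI)).2.2 ((Subgroup.mem_iInf.1 hP) ⟨h, hhI⟩)
  rw [h0] at h1
  exact Finsupp.mem_support_iff.1 hg h1.symm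

lemma const_mem [Infinite G] {E : Type*} (s : G → G → E) (c : G → E)
    (hc : Set.Finite {g : G | s g ≠ c}) : (fun _ => c) ∈ orbitClosure s := by
  letI : TopologicalSpace (G → E) := ⊥
  refine mem_closure_of_tendsto (f := fun g : G => fun h : G => s (g⁻¹ * h))
    (b := Filter.cofinite) ?_ (Filter.Eventually.of_forall fun g => ⟨g, rfl⟩)
  rw [tendsto_pi_nhds]
  intro h
  refine tendsto_const_nhds.congr' ?_
  change {g : G | c = s (g⁻¹ * h)} ∈ Filter.cofinite
  rw [Filter.mem_cofinite]
  refine (hc.preimage (f := fun g : G => g⁻¹ * h) ?_).subset ?_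
  · intro a _ b _ hab; simpa using hab
  · intro g hg; exact fun e => hg e.symm

lemma self_mem {E : Type*} (s : G → G → E) : s ∈ orbitClosure s := by
  letI : TopologicalSpace (G → E) := ⊥
  refine subset_closure ⟨1, ?_⟩
  simp

lemma exists_packing [DecidableEq G] (F T : Finset G) (hT : T.Nonempty) :
    ∃ R ⊆ F, (∀ r ∈ R, ∀ r' ∈ R, ∀ a ∈ T, ∀ a' ∈ T, r * a = r' * a' → r = r') ∧
      ∀ g ∈ F, ∃ r ∈ R, ∃ a ∈ T, ∃ a' ∈ T, g * a' = r * a := by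
  let S := F.powerset.filter fun R =>
    ∀ r ∈ R, ∀ r' ∈ R, ∀ a ∈ T, ∀ a' ∈ T, r * a = r' * a' → r = r'
  obtain ⟨R, hR, hmax⟩ := S.exists_max_image Finset.card ⟨∅, by simp [S]⟩
  obtain ⟨hRF, hRd⟩ := Finset.mem_filter.1 hR
  rw [Finset.mem_powerset] at hRF
  refine ⟨R, hRF, hRd, ?_⟩
  intro g hg
  by_contra hcon
  push Not at hcon
  have hgR : g ∉ R := by
    intro h
    obtain ⟨a, ha⟩ := hT
    exact hcon g h a ha a ha rfl
  have hin : insert g R ∈ S := by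
    refine Finset.mem_filter.2 ⟨Finset.mem_powerset.2 (Finset.insert_subset hg hRF), ?_⟩
    intro r hr r' hr' a ha a' ha' e
    rcases Finset.mem_insert.1 hr with h1 | h1 <;> rcases Finset.mem_insert.1 hr' with h2 | h2
    · rw [h1, h2]
    · rw [h1] at e
      exact absurd e (hcon r' h2 a' ha' a ha)
    · rw [h2] at e
      exact absurd e.symm (hcon r h1 a ha a' ha')
    · exact hRd r h1 r' h2 a ha a' ha' e
  have := hmax _ hin
  rw [Finset.card_insert_of_notMem hgR] at this
  omega

lemma finrank_supported [FiniteDimensional k V] (F : Finset G) :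
    FiniteDimensional k (Finsupp.supported V k (F : Set G)) ∧
    Module.finrank k (Finsupp.supported V k (F : Set G)) = F.card * Module.finrank k V := by
  constructor
  · exact Module.Finite.equiv (Finsupp.supportedEquivFinsupp (M := V) (R := k) (F : Set G)).symm
  · rw [(Finsupp.supportedEquivFinsupp (M := V) (R := k) (F : Set G)).finrank_eq,
      (Finsupp.linearEquivFunOnFinite k V (F : Set G)).finrank_eq, Module.finrank_pi_fintype]
    simp

lemma folner_right [DecidableEq G]
    (hG : ∀ (K : Finset G) (ε : ℝ), 0 < ε →
        ∃ F : Finset G, F.Nonempty ∧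
          ∀ g ∈ K, (((g • F) ∆ F).card : ℝ) ≤ ε * (F.card : ℝ))
    (E : Finset G) (n : ℕ) (hn : 0 < n) :
    ∃ F : Finset G, F.Nonempty ∧ n * (F * E).card ≤ (n + 1) * F.card := by
  have hpos : (0 : ℝ) < 1 / (n * (E.card + 1)) := by positivity
  obtain ⟨F, hF, hFo⟩ := hG E⁻¹ (1 / (n * (E.card + 1))) hpos
  refine ⟨F⁻¹, hF.inv, ?_⟩
  have hc : (F⁻¹ * E).card = (E⁻¹ * F).card := by
    rw [← Finset.card_inv (E⁻¹ * F), mul_inv_rev, inv_inv]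
  rw [hc, Finset.card_inv]
  have hsub : E⁻¹ * F ⊆ F ∪ E⁻¹.biUnion fun g => (g • F) ∆ F := by
    intro x hx
    obtain ⟨e, he, f, hf, rfl⟩ := Finset.mem_mul.1 hx
    by_cases h : e * f ∈ F
    · exact Finset.mem_union_left _ h
    · refine Finset.mem_union_right _ (Finset.mem_biUnion.2 ⟨e, he, ?_⟩)
      rw [Finset.mem_symmDiff]
      exact Or.inl ⟨Finset.smul_mem_smul_finset hf, h⟩
  have h1 : ((E⁻¹ * F).card : ℝ) ≤ F.card + ∑ g ∈ E⁻¹, (((g • F) ∆ F).card : ℝ) := by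
    exact_mod_cast (Finset.card_le_card hsub).trans
      ((Finset.card_union_le _ _).trans (Nat.add_le_add_left Finset.card_biUnion_le _))
  have h2 : ∑ g ∈ E⁻¹, (((g • F) ∆ F).card : ℝ) ≤
      E.card * (1 / (n * (E.card + 1)) * (F.card : ℝ)) := by
    refine (Finset.sum_le_sum hFo).trans ?_
    simp
  have hn' : (0 : ℝ) < n := by exact_mod_cast hn
  have h3 : (n : ℝ) * (E.card * (1 / (n * (E.card + 1)) * (F.card : ℝ))) ≤ F.card := by
    have : (n : ℝ) * (E.card * (1 / (n * (E.card + 1)) * (F.card : ℝ)))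
        = (E.card / (E.card + 1)) * F.card := by field_simp
    rw [this]
    refine mul_le_of_le_one_left (by positivity) ?_
    rw [div_le_one (by positivity)]; linarith
  have h4 : (n : ℝ) * (E⁻¹ * F).card ≤ (n + 1) * F.card := by
    have := mul_le_mul_of_nonneg_left (h1.trans (add_le_add_right h2 _)) hn'.le
    nlinarith
  exact_mod_cast h4

lemma arith (d p n f f' r r' : ℕ) (hn : n = 3 * d * p + 1) (hf : 0 < f) 
    (h1 : n * r ≤ f') (h2 : n * f' ≤ (n + 1) * f) (h3 : f ≤ p * r')
    (h : f * d + r' ≤ r * d + f' * d) : False := by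
  have a1 : n * n * p * (f * d + r') ≤ n * n * p * (r * d + f' * d) := Nat.mul_le_mul_left _ h
  have a2 : (n * p * d) * (n * r) ≤ (n * p * d) * f' := Nat.mul_le_mul_left _ h1
  have a3 : (p * d * (n + 1)) * (n * f') ≤ (p * d * (n + 1)) * ((n + 1) * f) :=
    Nat.mul_le_mul_left _ h2
  have a4 : (n * n) * f ≤ (n * n) * (p * r') := Nat.mul_le_mul_left _ h3
  have a5 : n * n * f ≤ (p * d * (2 * n + 1)) * f := by nlinarith
  have a6 : n * n ≤ p * d * (2 * n + 1) := Nat.le_of_mul_le_mul_right a5 hf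
  nlinarith [Nat.zero_le (p * d), Nat.zero_le (p * d * (p * d))]

lemma tr_supp [DecidableEq G] (g : G) (x : G →₀ V) (F E : Finset G) (hg : g ∈ F)
    (hx : x.support ⊆ E) :
    tr (k := k) g x ∈ Finsupp.supported V k ((F * E : Finset G) : Set G) := by
  rw [Finsupp.mem_supported]
  intro h hh
  rw [Finset.mem_coe, Finsupp.mem_support_iff, tr_apply] at hh
  exact Finset.mem_coe.2 (Finset.mem_mul.2
    ⟨g, hg, g⁻¹ * h, hx (Finsupp.mem_support_iff.2 hh), by group⟩)

lemma kernel_bound {ι : Type*} [Fintype ι] (f : W →ₗ[k] W) (X : Submodule k W)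
    (hX : FiniteDimensional k X) (u : ι → W) (hu : LinearIndependent k u)
    (h1 : ∀ i, u i ∈ X) (h2 : ∀ i, f (u i) = 0) :
    Fintype.card ι + Module.finrank k (X.map f) ≤ Module.finrank k X := by
  have hm : ∀ i, (⟨u i, h1 i⟩ : X) ∈ LinearMap.ker (f.domRestrict X) := fun i => by
    rw [LinearMap.mem_ker, LinearMap.domRestrict_apply]; exact h2 i
  let u' : ι → LinearMap.ker (f.domRestrict X) := fun i => ⟨⟨u i, h1 i⟩, hm i⟩
  have hu' : LinearIndependent k u' :=
    LinearIndependent.of_comp (X.subtype ∘ₗ (LinearMap.ker (f.domRestrict X)).subtype) hu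
  have h3 := hu'.fintype_card_le_finrank
  have h4 := LinearMap.finrank_range_add_finrank_ker (f.domRestrict X)
  rw [LinearMap.range_domRestrict] at h4
  omega

lemma tr_indep (z : G →₀ V) (hz : z ≠ 0) (R : Finset G)
    (hR : ∀ r ∈ R, ∀ r' ∈ R, ∀ a ∈ z.support, ∀ a' ∈ z.support, r * a = r' * a' → r = r') :
    LinearIndependent k (fun r : R => tr (k := k) r.1 z) := by
  refine Fintype.linearIndependent_iff.2 ?_
  intro g h1 r
  obtain ⟨e, he⟩ := Finsupp.support_nonempty_iff.2 hz
  have h2 := DFunLike.congr_fun h1 (r.1 * e)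
  rw [Finsupp.finsetSum_apply, Finset.sum_eq_single r] at h2
  · rw [Finsupp.smul_apply, tr_apply, inv_mul_cancel_left, Finsupp.zero_apply,
      smul_eq_zero] at h2
    exact h2.resolve_right (Finsupp.mem_support_iff.1 he)
  · intro b _ hbr
    rw [Finsupp.smul_apply, tr_apply]
    by_cases hb : b.1⁻¹ * (r.1 * e) ∈ z.support
    · exact absurd (Subtype.ext (hR b.1 b.2 r.1 r.2 _ hb e he (by group))) hbr
    · rw [Finsupp.notMem_support_iff.1 hb, smul_zero]
  · intro h; exact absurd (Finset.mem_univ _) h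

lemma amen [Finite V] [FiniteDimensional k V] [DecidableEq G]
    (hG : ∀ (K : Finset G) (ε : ℝ), 0 < ε →
        ∃ F : Finset G, F.Nonempty ∧
          ∀ g ∈ K, (((g • F) ∆ F).card : ℝ) ≤ ε * (F.card : ℝ))
    (M : Finset G) (c : G → (V →ₗ[k] V)) (A₀ : Set G) (hA₀ : A₀.Infinite)
    (hA : ∀ a ∈ A₀, ∀ v : V, ∃ w, sop M (fun _ => c) w
      = Finsupp.single a v - Finsupp.single 1 v) :
    Function.Injective (sop M (fun _ => c)) := by
  have := Fintype.ofFinite V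
  rw [← LinearMap.ker_eq_bot, LinearMap.ker_eq_bot']
  intro z hz
  by_contra hne
  set σ := sop M (fun _ => c) with hσ
  set Z := z.support with hZ
  have hZn : Z.Nonempty := Finsupp.support_nonempty_iff.2 hne
  set d := Module.finrank k V with hd
  set p := (Z * Z⁻¹).card with hp
  set n := 3 * d * p + 1 with hn
  obtain ⟨A, hAs, hAc⟩ := hA₀.exists_subset_card_eq n
  have hAn : A.Nonempty := Finset.card_pos.1 (by omega)
  choose! w hw using hA
  let E₀ : Finset G := A.biUnion fun a => Finset.univ.biUnion fun v : V => (w a v).support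
  let E : Finset G := E₀ ∪ (Z ∪ A)
  obtain ⟨F, hF, hFE⟩ := folner_right hG E n (by omega)
  obtain ⟨R, hRF, hRd, hRc⟩ := exists_packing F A hAn
  obtain ⟨R', hRF', hRd', hRc'⟩ := exists_packing F Z hZn
  obtain ⟨fd1, fr1⟩ := finrank_supported (k := k) (V := V) F
  obtain ⟨fd2, fr2⟩ := finrank_supported (k := k) (V := V) (F * E)
  obtain ⟨fd3, fr3⟩ := finrank_supported (k := k) (V := V) R
  set X := Finsupp.supported V k ((F * E : Finset G) : Set G) with hX
  have rel : ∀ r ∈ F, ∀ a ∈ A, ∀ v : V,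
      Finsupp.single (r * a) v - Finsupp.single r v ∈ X.map σ := by
    intro r hr a ha v
    refine ⟨tr (k := k) r (w a v), tr_supp r _ F E hr ?_, ?_⟩
    · intro x hx
      exact Finset.mem_union_left _ (Finset.mem_biUnion.2 ⟨a, ha,
        Finset.mem_biUnion.2 ⟨v, Finset.mem_univ _, hx⟩⟩)
    · rw [hσ, tr_sop, hw a (hAs ha) v, map_sub, tr_single, tr_single, mul_one]
  have hle : Finsupp.supported V k (F : Set G) ≤
      Finsupp.supported V k (R : Set G) ⊔ X.map σ := by
    intro x hx
    rw [← Finsupp.sum_single x]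
    refine Submodule.sum_mem _ fun g hg => ?_
    have hgF : g ∈ F := hx hg
    obtain ⟨r, hr, a, ha, a', ha', e⟩ := hRc g hgF
    have e1 := rel r (hRF hr) a ha (x g)
    have e2 := rel g hgF a' ha' (x g)
    rw [e] at e2
    have e3 : Finsupp.single g (x g) = Finsupp.single r (x g) +
      ((Finsupp.single (r * a) (x g) - Finsupp.single r (x g))
        - (Finsupp.single (r * a) (x g) - Finsupp.single g (x g))) := by abel
    rw [e3]
    exact Submodule.add_mem_sup (Finsupp.single_mem_supported k _ hr) (Submodule.sub_mem _ e1 e2)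
  have c1 : F.card * d ≤ R.card * d + Module.finrank k (X.map σ) := by
    rw [← fr1, ← fr3]
    exact (Submodule.finrank_mono hle).trans (Submodule.finrank_add_le_finrank_add_finrank _ _)
  have c2 : R'.card + Module.finrank k (X.map σ) ≤ (F * E).card * d := by
    rw [← fr2, ← Fintype.card_coe R']
    refine kernel_bound σ X fd2 (fun r : R' => tr (k := k) r.1 z) (tr_indep z hne R' hRd')
      (fun r => tr_supp r.1 z F E (hRF' r.2)
        (fun x hx => Finset.mem_union_right _ (Finset.mem_union_left _ hx))) (fun r => ?_)
    rw [hσ, tr_sop, ← hσ, hz, map_zero]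
  have c4 : n * R.card ≤ (F * E).card := by
    have : (R * A).card = R.card * A.card := by
      rw [Finset.card_mul_iff]
      rintro ⟨r, a⟩ h1 ⟨r', a'⟩ h2 h
      obtain ⟨hr, ha⟩ := Set.mem_prod.1 h1
      obtain ⟨hr', ha'⟩ := Set.mem_prod.1 h2
      have e : r = r' := hRd r hr r' hr' a ha a' ha' h
      subst e
      simpa using h
    rw [← hAc, mul_comm, ← this]
    exact Finset.card_le_card (Finset.mul_subset_mul hRF
      (fun x hx => Finset.mem_union_right _ (Finset.mem_union_right _ hx)))
  have c5 : F.card ≤ p * R'.card := by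
    have : F ⊆ R' * (Z * Z⁻¹) := by
      intro g hg
      obtain ⟨r, hr, a, ha, a', ha', e⟩ := hRc' g hg
      refine Finset.mem_mul.2 ⟨r, hr, a * a'⁻¹,
        Finset.mul_mem_mul ha (Finset.inv_mem_inv ha'), ?_⟩
      rw [← mul_assoc, ← e]; group
    rw [mul_comm]
    exact (Finset.card_le_card this).trans Finset.card_mul_le
  exact arith d p n F.card (F * E).card R.card R'.card hn hF.card_pos c4 hFE c5 (by omega)

lemma exists_rel [Infinite G] [Finite V] [DecidableEq G] (M : Finset G)
    (s : G → G → (V →ₗ[k] V)) (c : G → (V →ₗ[k] V))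
    (hc : Set.Finite {g : G | s g ≠ c}) (hs : Function.Surjective (sop M s)) :
    ∃ A₀ : Set G, A₀.Infinite ∧ ∀ a ∈ A₀, ∀ v : V, ∃ w, sop M (fun _ => c) w
      = Finsupp.single a v - Finsupp.single 1 v := by
  have := hc.to_subtype
  choose w hw using fun (h : G) (v : V) => hs (Finsupp.single h v)
  let f : G → (V → {g : G | s g ≠ c} → V) := fun h v g =>
    (sop M s - sop M (fun _ => c)) (w h v) g.1
  obtain ⟨y, hy⟩ := Finite.exists_infinite_fiber f
  have hy' : (f ⁻¹' {y}).Infinite := Set.infinite_coe_iff.1 hy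
  obtain ⟨a₀, ha₀⟩ := hy'.nonempty
  refine ⟨(fun a => a₀⁻¹ * a) '' (f ⁻¹' {y}),
    hy'.image (mul_right_injective a₀⁻¹).injOn, ?_⟩
  rintro _ ⟨a, ha, rfl⟩ v
  refine ⟨tr (k := k) a₀⁻¹ (w a v - w a₀ v), ?_⟩
  have hD : (sop M s - sop M (fun _ => c)) (w a v - w a₀ v) = 0 := by
    ext g
    by_cases hg : s g = c
    · exact diff_supp M s c _ g hg
    · have e : f a = f a₀ := by rw [ha, ha₀]
      have := congrFun (congrFun e v) ⟨g, hg⟩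
      rw [map_sub, Finsupp.sub_apply]
      exact sub_eq_zero.2 this
  rw [LinearMap.sub_apply, sub_eq_zero] at hD
  rw [tr_sop, ← hD, map_sub, hw, hw, map_sub, tr_single, tr_single, inv_mul_cancel]

end Aux17

/-- Dual surjunctivity: over a finite vector space alphabet, if `s` is asymptotic to
a constant configuration of local defining maps, then `σ_s` is invertible as soon as
(i) `G` is amenable (Følner condition) and `σ_s` is post-surjective, and also as
soon as (ii) `G` is residually finite and `σ_s` is stably post-surjective. -/
theorem stmt17 {k V G : Type*} [Field k] [Finite k] [AddCommGroup V] [Module k V]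
    [FiniteDimensional k V] [Group G] [Countable G] [DecidableEq G]
    (M : Finset G) (s : G → G → (V →ₗ[k] V)) (hs : ∀ g, ∀ m ∉ M, s g m = 0)
    (hconst : ∃ s₀ : G → (V →ₗ[k] V), Set.Finite {g : G | s g ≠ s₀}) :
    ((∀ (K : Finset G) (ε : ℝ), 0 < ε →
        ∃ F : Finset G, F.Nonempty ∧
          ∀ g ∈ K, (((g • F) ∆ F).card : ℝ) ≤ ε * (F.card : ℝ)) →
      PostSurjective (nucaMap M s) →
      IsInvertibleNuca k (nucaMap M s)) ∧
    ((∀ g : G, g ≠ 1 → ∃ N : Subgroup G, N.Normal ∧ N.FiniteIndex ∧ g ∉ N) →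
      (∀ p ∈ orbitClosure s, PostSurjective (nucaMap M p)) →
      IsInvertibleNuca k (nucaMap M s)) := by
  classical
  obtain ⟨c, hc⟩ := hconst
  have hV : Finite V := Module.finite_of_finite k
  constructor
  · intro hG hp
    have hsur := Aux17.sop_surj M s hp
    rcases finite_or_infinite G with hfin | hinf
    · exact Aux17.finite_case M s hsur
    · obtain ⟨A₀, h1, h2⟩ := Aux17.exists_rel M s c hc hsur
      exact Aux17.final M s c hc hsur (Aux17.amen hG M c A₀ h1 h2)
  · intro hG hp
    have hsur := Aux17.sop_surj M s (hp s (Aux17.self_mem s))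
    rcases finite_or_infinite G with hfin | hinf
    · exact Aux17.finite_case M s hsur
    · exact Aux17.final M s c hc hsur (Aux17.resfin hG M c
        (Aux17.sop_surj M _ (hp _ (Aux17.const_mem s c hc))))
end
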